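/- Fix an integer n ≥ 1 and a real c > 0. Let L ⊆ ℝ be an open interval and f : L → (−∞, 0) a C² solution of the type III Grim Reaper ODE which is time-like at some s₀ ∈ L, i.e. f'(s₀)² > b_III(f(s₀))², and which is maximal in the sense that there is no solution of the type III Grim Reaper ODE defined on a strictly larger open interval whose restriction to L is f. Then there exists k ∈ ℝ such that: if f'(s₀) > 0, then L = (k, +∞), f(s) → −∞ as s → k from the right, and f(s) → 0 as s → +∞; and if f'(s₀) < 0, then L = (−∞, k), f(s) → −∞ as s → k from the left, and f(s) → 0 as s → −∞. -/

import Mathlib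

open Real Set Filter Topology

/-- The type III warping function `b_III(y) = -n·c·tanh(c·y)`. -/
noncomputable def bIII (n : ℕ) (c : ℝ) : ℝ → ℝ := fun y => -((n : ℝ) * c * Real.tanh (c * y))

/-- `f` is a `C²` solution of the type III Grim Reaper ODE on `L`, with values in
`I_III = (-∞, 0)`. -/
def IsGrimReaperSolIII (n : ℕ) (c : ℝ) (f : ℝ → ℝ) (L : Set ℝ) : Prop :=
  (∀ s ∈ L, f s ∈ Set.Iio (0 : ℝ)) ∧
  ContDiffOn ℝ 2 f L ∧
  ∀ s ∈ L,
    deriv (deriv f) s =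
      (1 - (deriv f s) ^ 2 / (bIII n c (f s)) ^ 2) * bIII n c (f s) * (c ^ 2 * (n : ℝ) ^ 2)
        + (deriv (bIII n c) (f s) / bIII n c (f s)) * (deriv f s) ^ 2

/-!
In the coordinate `w = (-sinh (c f))⁻ⁿ` on `(-∞, 0)` the Grim Reaper equation becomes the linear
equation `w'' = d² w` with `d = c² n²`, because `dw/df = d w / b(f)`. The time-like condition at
`s₀` reads `(d w)² < (w')²`, which selects the solutions `w = A sinh (d (s - k))` with `A` of the
sign of `f' s₀`. The solution `f` extends as long as `w > 0`, that is, over the whole half-line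
on one side of `k`; moreover `f → -∞` where `w → 0⁺` and `f → 0` where `w → +∞`.
-/

section HyperbolicEquation

variable {A d k s s₀ : ℝ} {L : Set ℝ}

lemma hasDerivAt_const_mul_sub (d k t : ℝ) : HasDerivAt (fun s => d * (s - k)) d t := by
  simpa only [id, mul_one] using ((hasDerivAt_id t).sub_const k).const_mul d

lemma eq_cosh_add_sinh_of_hasDerivAt {u v : ℝ → ℝ} (hL : IsOpen L) (hLconn : IsPreconnected L)
    (hs₀ : s₀ ∈ L) (hu : ∀ s ∈ L, HasDerivAt u (d * v s) s)
    (hv : ∀ s ∈ L, HasDerivAt v (d * u s) s) (hs : s ∈ L) :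
    u s = u s₀ * cosh (d * (s - s₀)) + v s₀ * sinh (d * (s - s₀)) := by
  have hθ := hasDerivAt_const_mul_sub d s₀
  have eq_initial {F : ℝ → ℝ} (hF : ∀ t ∈ L, HasDerivAt F 0 t) : F s = F s₀ :=
    hL.is_const_of_deriv_eq_zero hLconn
      (fun t ht => (hF t ht).differentiableAt.differentiableWithinAt)
      (fun t ht => (hF t ht).deriv) hs hs₀
  -- The hyperbolic rotation by `-d (s - s₀)` undoes the flow, so it brings `(u, v)` back to `s₀`.
  have hu₀ : u s * cosh (d * (s - s₀)) - v s * sinh (d * (s - s₀)) = u s₀ := by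
    simpa using eq_initial fun t ht =>
      (((hu t ht).mul (hθ t).cosh).sub ((hv t ht).mul (hθ t).sinh)).congr_deriv (by ring)
  have hv₀ : v s * cosh (d * (s - s₀)) - u s * sinh (d * (s - s₀)) = v s₀ := by
    simpa using eq_initial fun t ht =>
      (((hv t ht).mul (hθ t).cosh).sub ((hu t ht).mul (hθ t).sinh)).congr_deriv (by ring)
  rw [← hu₀, ← hv₀]
  linear_combination -u s * cosh_sq_sub_sinh_sq (d * (s - s₀))

lemma exists_eq_mul_sinh_eq_mul_cosh {x y : ℝ} (h : x ^ 2 < y ^ 2) :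
    ∃ A θ, 0 < A * y ∧ x = A * sinh θ ∧ y = A * cosh θ := by
  have hy : y ≠ 0 := by
    rintro rfl
    nlinarith [sq_nonneg x]
  have hxy : x / y ∈ Ioo (-1) 1 := by
    rw [mem_Ioo, ← abs_lt, ← sq_lt_one_iff_abs_lt_one, div_pow]
    exact (div_lt_one (sq_pos_of_ne_zero hy)).2 h
  have hcosh := cosh_pos (artanh (x / y))
  refine ⟨y / cosh (artanh (x / y)), artanh (x / y), ?_, ?_, ?_⟩
  · rw [div_mul_eq_mul_div]
    exact div_pos (mul_self_pos.2 hy) hcosh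
  · rw [div_mul_eq_mul_div, mul_div_assoc, ← tanh_eq_sinh_div_cosh, tanh_artanh hxy,
      mul_div_cancel₀ x hy]
  · exact (div_mul_cancel₀ y hcosh.ne').symm

lemma exists_eqOn_mul_sinh_of_deriv_deriv_eq {u : ℝ → ℝ} (hd : 0 < d) (hL : IsOpen L)
    (hLconn : IsPreconnected L) (hs₀ : s₀ ∈ L) (hu : ContDiffOn ℝ 2 u L)
    (hode : ∀ s ∈ L, deriv (deriv u) s = d ^ 2 * u s)
    (hlt : (d * u s₀) ^ 2 < deriv u s₀ ^ 2) :
    ∃ A k, 0 < A * deriv u s₀ ∧ EqOn u (fun s => A * sinh (d * (s - k))) L := by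
  have hu' (s) (hs : s ∈ L) : HasDerivAt u (d * (deriv u s / d)) s := by
    rw [mul_div_cancel₀ _ hd.ne']
    exact ((hu.differentiableOn two_ne_zero).differentiableAt (hL.mem_nhds hs)).hasDerivAt
  have hu'' (s) (hs : s ∈ L) : HasDerivAt (fun t => deriv u t / d) (d * u s) s := by
    have hC1 : ContDiffOn ℝ 1 (deriv u) L := hu.deriv_of_isOpen hL (by norm_num)
    have h := ((hC1.differentiableOn one_ne_zero).differentiableAt (hL.mem_nhds hs)).hasDerivAt
    refine (h.div_const d).congr_deriv ?_
    rw [hode s hs]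
    field_simp
  have hlt' : u s₀ ^ 2 < (deriv u s₀ / d) ^ 2 := by
    rw [div_pow, lt_div_iff₀ (by positivity)]
    linarith
  obtain ⟨A, θ, hA, hsinh, hcosh⟩ := exists_eq_mul_sinh_eq_mul_cosh hlt'
  refine ⟨A, s₀ - θ / d, ?_, fun s hs => ?_⟩
  · rwa [← mul_div_assoc, div_pos_iff_of_pos_right hd] at hA
  · have hangle : d * (s - (s₀ - θ / d)) = θ + d * (s - s₀) := by
      field_simp
      ring
    simp only [hangle, sinh_add]
    rw [eq_cosh_add_sinh_of_hasDerivAt hL hLconn hs₀ hu' hu'' hs, hcosh, hsinh]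
    ring

lemma mul_sinh_pos_iff_of_pos (hd : 0 < d) (hA : 0 < A) :
    0 < A * sinh (d * (s - k)) ↔ k < s := by
  rw [mul_pos_iff_of_pos_left hA, sinh_pos_iff, mul_pos_iff_of_pos_left hd, sub_pos]

lemma mul_sinh_pos_iff_of_neg (hd : 0 < d) (hA : A < 0) :
    0 < A * sinh (d * (s - k)) ↔ s < k := by
  rw [← neg_mul_neg, ← sinh_neg, ← mul_neg, neg_sub, mul_sinh_pos_iff_of_pos hd (neg_pos.2 hA)]

lemma tendsto_mul_sinh_atTop (hd : 0 < d) (hA : 0 < A) (k : ℝ) :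
    Tendsto (fun s => A * sinh (d * (s - k))) atTop atTop :=
  (sinhOrderIso.tendsto_atTop.comp
    ((tendsto_atTop_add_const_right _ (-k) tendsto_id).const_mul_atTop hd)).const_mul_atTop hA

lemma tendsto_mul_sinh_atBot (hd : 0 < d) (hA : A < 0) (k : ℝ) :
    Tendsto (fun s => A * sinh (d * (s - k))) atBot atTop :=
  (sinhOrderIso.tendsto_atBot.comp
    ((tendsto_atBot_add_const_right _ (-k) tendsto_id).const_mul_atBot hd)).const_mul_atBot_of_neg
      hA

lemma deriv_deriv_mul_sinh (A d k s : ℝ) :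
    deriv (deriv fun s => A * sinh (d * (s - k))) s = d ^ 2 * (A * sinh (d * (s - k))) := by
  have hθ := hasDerivAt_const_mul_sub d k
  have h₁ : deriv (fun s => A * sinh (d * (s - k))) = fun s => A * (cosh (d * (s - k)) * d) :=
    funext fun t => ((hθ t).sinh.const_mul A).deriv
  rw [h₁, (((hθ s).cosh.mul_const d).const_mul A).deriv]
  ring

end HyperbolicEquation

lemma deriv_deriv_comp_eq_iff {b φ f : ℝ → ℝ} {d s : ℝ} (hd : d ≠ 0) (hf : ContDiffAt ℝ 2 f s)
    (hb : DifferentiableAt ℝ b (f s)) (hb₀ : b (f s) ≠ 0) (hφ₀ : φ (f s) ≠ 0)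
    (hφ : ∀ᶠ y in 𝓝 (f s), HasDerivAt φ (d * φ y / b y) y) :
    deriv (deriv (φ ∘ f)) s = d ^ 2 * φ (f s) ↔
      deriv (deriv f) s = (1 - deriv f s ^ 2 / b (f s) ^ 2) * b (f s) * d
        + deriv b (f s) / b (f s) * deriv f s ^ 2 := by
  have hf' : HasDerivAt f (deriv f s) s := (hf.differentiableAt two_ne_zero).hasDerivAt
  have hf'' : HasDerivAt (deriv f) (deriv (deriv f) s) s :=
    ((hf.derivWithin (m := 1) (by norm_num)).differentiableAt one_ne_zero).hasDerivAt
  have hfirst : deriv (φ ∘ f) =ᶠ[𝓝 s] fun t => d * φ (f t) / b (f t) * deriv f t := by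
    filter_upwards [hf.continuousAt.eventually hφ, hf.eventually (by simp)] with t hφt hft
    exact (hφt.comp t (hft.differentiableAt two_ne_zero).hasDerivAt).deriv
  have hsecond : deriv (deriv (φ ∘ f)) s - d ^ 2 * φ (f s) = d * φ (f s) / b (f s) *
      (deriv (deriv f) s - ((1 - deriv f s ^ 2 / b (f s) ^ 2) * b (f s) * d
        + deriv b (f s) / b (f s) * deriv f s ^ 2)) := by
    have hφf := (hφ.self_of_nhds.comp s hf').const_mul d
    have hbf := hb.hasDerivAt.comp s hf'
    rw [hfirst.deriv_eq]
    refine (congrArg (· - _) ((hφf.div hbf hb₀).mul hf'').deriv).trans ?_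
    simp only [Function.comp_apply, Pi.div_apply]
    field_simp
    ring
  rw [← sub_eq_zero, hsecond, mul_eq_zero_iff_left (by positivity), sub_eq_zero]

section LinearCoordinate

variable {n : ℕ} {c : ℝ} {y w : ℝ}

/-- The constant `d_III = c² n²` of the type III Grim Reaper equation. -/
noncomputable def dIII (n : ℕ) (c : ℝ) : ℝ := c ^ 2 * (n : ℝ) ^ 2

/-- The coordinate `w` on `I_III = (-∞, 0)`, with values in `(0, ∞)`, in which the type III Grim
Reaper equation becomes the linear equation `w'' = d_III² w`. -/
noncomputable def linearCoordIII (n : ℕ) (c y : ℝ) : ℝ := (-sinh (c * y)) ^ (-(n : ℝ))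

/-- The inverse of the coordinate `linearCoordIII n c`, recovering `y < 0` from `w > 0`. -/
noncomputable def linearCoordIIIInv (n : ℕ) (c w : ℝ) : ℝ := -(arsinh (w ^ (-(n : ℝ))⁻¹) / c)

lemma dIII_pos (hn : n ≠ 0) (hc : 0 < c) : 0 < dIII n c := by
  unfold dIII
  positivity

lemma neg_sinh_mul_pos (hc : 0 < c) (hy : y < 0) : 0 < -sinh (c * y) :=
  neg_pos.2 (sinh_neg_iff.2 (mul_neg_of_pos_of_neg hc hy))

lemma bIII_eq_neg_sinh_div_cosh (n : ℕ) (c y : ℝ) :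
    bIII n c y = n * c * (-sinh (c * y) / cosh (c * y)) := by
  rw [bIII, tanh_eq_sinh_div_cosh]
  ring

lemma bIII_pos (hn : n ≠ 0) (hc : 0 < c) (hy : y < 0) : 0 < bIII n c y := by
  rw [bIII_eq_neg_sinh_div_cosh]
  have := neg_sinh_mul_pos hc hy
  have := cosh_pos (c * y)
  positivity

lemma differentiable_bIII (n : ℕ) (c : ℝ) : Differentiable ℝ (bIII n c) := by
  have hcosh (y : ℝ) : cosh (c * y) ≠ 0 := (cosh_pos _).ne'
  rw [funext (bIII_eq_neg_sinh_div_cosh n c)]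
  fun_prop (disch := exact hcosh _)

lemma linearCoordIII_pos (n : ℕ) (hc : 0 < c) (hy : y < 0) : 0 < linearCoordIII n c y :=
  rpow_pos_of_pos (neg_sinh_mul_pos hc hy) _

lemma linearCoordIIIInv_neg (n : ℕ) (hc : 0 < c) (hw : 0 < w) : linearCoordIIIInv n c w < 0 :=
  neg_lt_zero.2 (div_pos (arsinh_pos_iff.2 (rpow_pos_of_pos hw _)) hc)

lemma linearCoordIII_linearCoordIIIInv (hn : n ≠ 0) (hc : c ≠ 0) (hw : 0 ≤ w) :
    linearCoordIII n c (linearCoordIIIInv n c w) = w := by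
  rw [linearCoordIII, linearCoordIIIInv, mul_neg, mul_div_cancel₀ _ hc, sinh_neg, neg_neg,
    sinh_arsinh, rpow_inv_rpow hw (by simpa)]

lemma linearCoordIIIInv_linearCoordIII (hn : n ≠ 0) (hc : 0 < c) (hy : y < 0) :
    linearCoordIIIInv n c (linearCoordIII n c y) = y := by
  rw [linearCoordIII, linearCoordIIIInv, rpow_rpow_inv (neg_sinh_mul_pos hc hy).le (by simpa),
    arsinh_neg, arsinh_sinh, neg_div, neg_neg, mul_div_cancel_left₀ _ hc.ne']

lemma hasDerivAt_linearCoordIII (hn : n ≠ 0) (hc : 0 < c) (hy : y < 0) :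
    HasDerivAt (linearCoordIII n c) (dIII n c * linearCoordIII n c y / bIII n c y) y := by
  have hsinh := neg_sinh_mul_pos hc hy
  have h := (((hasDerivAt_id y).const_mul c).sinh.neg).rpow_const (p := -(n : ℝ))
    (Or.inl hsinh.ne')
  refine h.congr_deriv ?_
  simp only [id, Pi.neg_apply]
  rw [rpow_sub_one hsinh.ne', bIII_eq_neg_sinh_div_cosh, linearCoordIII, dIII]
  field_simp

lemma contDiffAt_linearCoordIII (n : ℕ) (hc : 0 < c) (hy : y < 0) :
    ContDiffAt ℝ 2 (linearCoordIII n c) y :=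
  ContDiffAt.rpow_const_of_ne (by fun_prop) (neg_sinh_mul_pos hc hy).ne'

lemma contDiffAt_linearCoordIIIInv (n : ℕ) (c : ℝ) (hw : w ≠ 0) :
    ContDiffAt ℝ 2 (linearCoordIIIInv n c) w :=
  ((contDiffAt_id.rpow_const_of_ne hw).arsinh.div_const c).neg

lemma tendsto_linearCoordIIIInv_nhdsGT_zero (hn : n ≠ 0) (hc : 0 < c) :
    Tendsto (linearCoordIIIInv n c) (𝓝[>] 0) atBot := by
  have hp : (-(n : ℝ))⁻¹ < 0 := inv_lt_zero.2 (neg_lt_zero.2 (by positivity))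
  exact tendsto_neg_atTop_atBot.comp ((sinhOrderIso.symm.tendsto_atTop.comp
    (tendsto_rpow_neg_nhdsGT_zero hp)).atTop_div_const hc)

lemma tendsto_linearCoordIIIInv_atTop (hn : n ≠ 0) (c : ℝ) :
    Tendsto (linearCoordIIIInv n c) atTop (𝓝 0) := by
  have hpow : Tendsto (fun w : ℝ => w ^ (-(n : ℝ))⁻¹) atTop (𝓝 0) := by
    rw [inv_neg]
    exact tendsto_rpow_neg_atTop (by positivity)
  have hlim : Tendsto (linearCoordIIIInv n c) atTop (𝓝 (-(arsinh 0 / c))) :=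
    (hpow.arsinh.div_const c).neg
  simpa using hlim

end LinearCoordinate

section GrimReaper

variable {n : ℕ} {c A k s s₀ : ℝ} {f u : ℝ → ℝ} {L : Set ℝ}

lemma deriv_deriv_linearCoordIII_comp_eq_iff (hn : n ≠ 0) (hc : 0 < c) (hf : ContDiffAt ℝ 2 f s)
    (hfs : f s < 0) :
    deriv (deriv (linearCoordIII n c ∘ f)) s = dIII n c ^ 2 * linearCoordIII n c (f s) ↔
      deriv (deriv f) s =
        (1 - deriv f s ^ 2 / bIII n c (f s) ^ 2) * bIII n c (f s) * dIII n c
          + deriv (bIII n c) (f s) / bIII n c (f s) * deriv f s ^ 2 :=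
  deriv_deriv_comp_eq_iff (dIII_pos hn hc).ne' hf (differentiable_bIII n c _)
    (bIII_pos hn hc hfs).ne' (linearCoordIII_pos n hc hfs).ne'
    ((eventually_lt_nhds hfs).mono fun _ hy => hasDerivAt_linearCoordIII hn hc hy)

lemma isGrimReaperSolIII_linearCoordIIIInv_comp (hn : n ≠ 0) (hc : 0 < c) (hL : IsOpen L)
    (hu : ContDiffOn ℝ 2 u L) (hpos : ∀ s ∈ L, 0 < u s)
    (hode : ∀ s ∈ L, deriv (deriv u) s = dIII n c ^ 2 * u s) :
    IsGrimReaperSolIII n c (linearCoordIIIInv n c ∘ u) L := by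
  have hneg (s) (hs : s ∈ L) : linearCoordIIIInv n c (u s) < 0 :=
    linearCoordIIIInv_neg n hc (hpos s hs)
  have hsmooth (s) (hs : s ∈ L) : ContDiffAt ℝ 2 (linearCoordIIIInv n c ∘ u) s :=
    (contDiffAt_linearCoordIIIInv n c (hpos s hs).ne').comp s (hu.contDiffAt (hL.mem_nhds hs))
  have hcoord : EqOn (linearCoordIII n c ∘ linearCoordIIIInv n c ∘ u) u L := fun s hs =>
    linearCoordIII_linearCoordIIIInv hn hc.ne' (hpos s hs).le
  refine ⟨hneg, fun s hs => (hsmooth s hs).contDiffWithinAt, fun s hs => ?_⟩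
  refine (deriv_deriv_linearCoordIII_comp_eq_iff hn hc (hsmooth s hs) (hneg s hs)).1 ?_
  rw [(hcoord.eventuallyEq_of_mem (hL.mem_nhds hs)).deriv.deriv_eq, hode s hs]
  exact congrArg _ (hcoord hs).symm

/-- The type III.A profile: the curve whose linear coordinate is `A sinh (d_III (s - k))`. It is
meaningful only where this coordinate is positive. -/
noncomputable def timelikeProfileIII (n : ℕ) (c A k : ℝ) : ℝ → ℝ :=
  linearCoordIIIInv n c ∘ fun s => A * sinh (dIII n c * (s - k))

lemma isGrimReaperSolIII_timelikeProfileIII (hn : n ≠ 0) (hc : 0 < c) (hL : IsOpen L)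
    (hpos : ∀ s ∈ L, 0 < A * sinh (dIII n c * (s - k))) :
    IsGrimReaperSolIII n c (timelikeProfileIII n c A k) L :=
  isGrimReaperSolIII_linearCoordIIIInv_comp hn hc hL (by fun_prop) hpos
    fun s _ => deriv_deriv_mul_sinh A (dIII n c) k s

lemma tendsto_timelikeProfileIII_nhdsWithin (hn : n ≠ 0) (hc : 0 < c)
    (hpos : ∀ s ∈ L, 0 < A * sinh (dIII n c * (s - k))) :
    Tendsto (timelikeProfileIII n c A k) (𝓝[L] k) atBot := by
  refine (tendsto_linearCoordIIIInv_nhdsGT_zero hn hc).comp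
    (tendsto_nhdsWithin_iff.2 ⟨?_, eventually_nhdsWithin_of_forall hpos⟩)
  have hcont : Continuous fun s => A * sinh (dIII n c * (s - k)) := by fun_prop
  exact (hcont.tendsto' k 0 (by simp)).mono_left nhdsWithin_le_nhds

lemma IsGrimReaperSolIII.exists_eqOn_timelikeProfileIII (hf : IsGrimReaperSolIII n c f L)
    (hn : n ≠ 0) (hc : 0 < c) (hL : IsOpen L) (hLconn : L.OrdConnected) (hs₀ : s₀ ∈ L)
    (htime : bIII n c (f s₀) ^ 2 < deriv f s₀ ^ 2) :
    ∃ A k, 0 < A * deriv f s₀ ∧ (∀ s ∈ L, 0 < A * sinh (dIII n c * (s - k))) ∧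
      EqOn (timelikeProfileIII n c A k) f L := by
  obtain ⟨hneg, hsmooth, hode⟩ := hf
  have hsmoothAt (s) (hs : s ∈ L) : ContDiffAt ℝ 2 f s := hsmooth.contDiffAt (hL.mem_nhds hs)
  have hb := bIII_pos hn hc (hneg s₀ hs₀)
  have hw := linearCoordIII_pos n hc (hneg s₀ hs₀)
  have hd := dIII_pos hn hc
  set q := dIII n c * linearCoordIII n c (f s₀) / bIII n c (f s₀)
  have hq₀ : 0 < q := by positivity
  have hderiv : deriv (linearCoordIII n c ∘ f) s₀ = q * deriv f s₀ :=
    ((hasDerivAt_linearCoordIII hn hc (hneg s₀ hs₀)).comp s₀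
      ((hsmoothAt s₀ hs₀).differentiableAt two_ne_zero).hasDerivAt).deriv
  have hlt : (dIII n c * (linearCoordIII n c ∘ f) s₀) ^ 2
      < deriv (linearCoordIII n c ∘ f) s₀ ^ 2 := by
    have hqb : dIII n c * (linearCoordIII n c ∘ f) s₀ = q * bIII n c (f s₀) :=
      (div_mul_cancel₀ _ hb.ne').symm
    rw [hderiv, hqb, mul_pow, mul_pow]
    gcongr
  obtain ⟨A, k, hA, heq⟩ := exists_eqOn_mul_sinh_of_deriv_deriv_eq hd hL hLconn.isPreconnected hs₀
    (fun s hs => ((contDiffAt_linearCoordIII n hc (hneg s hs)).comp s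
      (hsmoothAt s hs)).contDiffWithinAt)
    (fun s hs => (deriv_deriv_linearCoordIII_comp_eq_iff hn hc (hsmoothAt s hs) (hneg s hs)).2
      (hode s hs)) hlt
  refine ⟨A, k, ?_, fun s hs => ?_, fun s hs => ?_⟩
  · rwa [hderiv, mul_left_comm, mul_pos_iff_of_pos_left hq₀] at hA
  · exact (linearCoordIII_pos n hc (hneg s hs)).trans_eq (heq hs)
  · exact (congrArg _ (heq hs).symm).trans (linearCoordIIIInv_linearCoordIII hn hc (hneg s hs))

end GrimReaper

/-- A maximal time-like solution of the type III Grim Reaper ODE is of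
Type III.A: defined on `(k, +∞)` (if increasing at `s₀`) or `(-∞, k)` (if decreasing at
`s₀`), blowing up to `-∞` at the finite end `k` and tending to `0` at the infinite end. -/
theorem grimReaperIII_timelike_classification (n : ℕ) (hn : 1 ≤ n) (c : ℝ) (hc : 0 < c)
    (L : Set ℝ) (hLopen : IsOpen L) (hLconn : L.OrdConnected)
    (f : ℝ → ℝ) (hf : IsGrimReaperSolIII n c f L)
    (s₀ : ℝ) (hs₀ : s₀ ∈ L)
    (htime : (bIII n c (f s₀)) ^ 2 < (deriv f s₀) ^ 2)
    (hmax : ∀ (L' : Set ℝ) (g : ℝ → ℝ), IsOpen L' → L'.OrdConnected → L ⊆ L' →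
      IsGrimReaperSolIII n c g L' → Set.EqOn g f L → L' = L) :
    ∃ k : ℝ,
      (0 < deriv f s₀ →
        L = Set.Ioi k ∧
        Filter.Tendsto f (𝓝[>] k) Filter.atBot ∧
        Filter.Tendsto f Filter.atTop (𝓝 0)) ∧
      (deriv f s₀ < 0 →
        L = Set.Iio k ∧
        Filter.Tendsto f (𝓝[<] k) Filter.atBot ∧
        Filter.Tendsto f Filter.atBot (𝓝 0)) := by
  have hn₀ : n ≠ 0 := Nat.one_le_iff_ne_zero.1 hn
  have hd := dIII_pos hn₀ hc
  obtain ⟨A, k, hA, hpos, heq⟩ :=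
    hf.exists_eqOn_timelikeProfileIII hn₀ hc hLopen hLconn hs₀ htime
  refine ⟨k, fun hincr => ?_, fun hdecr => ?_⟩
  · have hA₀ : 0 < A := (pos_iff_pos_of_mul_pos hA).2 hincr
    have hdom (s : ℝ) := mul_sinh_pos_iff_of_pos (s := s) (k := k) hd hA₀
    obtain rfl : Ioi k = L := hmax _ (timelikeProfileIII n c A k) isOpen_Ioi ordConnected_Ioi
      (fun s hs => (hdom s).1 (hpos s hs))
      (isGrimReaperSolIII_timelikeProfileIII hn₀ hc isOpen_Ioi fun s => (hdom s).2) heq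
    exact ⟨rfl,
      (tendsto_timelikeProfileIII_nhdsWithin hn₀ hc hpos).congr' heq.eventuallyEq_nhdsWithin,
      ((tendsto_linearCoordIIIInv_atTop hn₀ c).comp (tendsto_mul_sinh_atTop hd hA₀ k)).congr'
        (heq.eventuallyEq_of_mem (Ioi_mem_atTop k))⟩
  · have hA₀ : A < 0 := (neg_iff_neg_of_mul_pos hA).2 hdecr
    have hdom (s : ℝ) := mul_sinh_pos_iff_of_neg (s := s) (k := k) hd hA₀
    obtain rfl : Iio k = L := hmax _ (timelikeProfileIII n c A k) isOpen_Iio ordConnected_Iio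
      (fun s hs => (hdom s).1 (hpos s hs))
      (isGrimReaperSolIII_timelikeProfileIII hn₀ hc isOpen_Iio fun s => (hdom s).2) heq
    exact ⟨rfl,
      (tendsto_timelikeProfileIII_nhdsWithin hn₀ hc hpos).congr' heq.eventuallyEq_nhdsWithin,
      ((tendsto_linearCoordIIIInv_atTop hn₀ c).comp (tendsto_mul_sinh_atBot hd hA₀ k)).congr'
        (heq.eventuallyEq_of_mem (Iio_mem_atBot k))⟩
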